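/- For every ε > 0 and every y ∈ C_c^∞(ℝ^{2d}), with A_ε y = Δ_v y − v·∇_v y − v·∇_x y + ε Δ_x y one has ∫_{ℝ^d} ∫_{ℝ^d} μ(v) y(x,v) (A_ε y)(x,v) dv dx = − ∫_{ℝ^d} ∫_{ℝ^d} μ(v) ( ‖∇_v y(x,v)‖² + ε ‖∇_x y(x,v)‖² ) dv dx. -/

import Mathlib

open MeasureTheory
open scoped RealInnerProductSpace

noncomputable section

/-- `E d` is Euclidean space `ℝ^d`. -/
abbrev E (d : ℕ) := EuclideanSpace ℝ (Fin d)

/-- The Maxwellian `μ(v) = (2π)^{-d/2} exp(-‖v‖²/2)`. -/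
def maxwellian (d : ℕ) (v : E d) : ℝ :=
  (2 * Real.pi) ^ (-(d : ℝ) / 2) * Real.exp (-‖v‖ ^ 2 / 2)

/-- The weighted `L²_μ` norm `‖y‖_Y`. -/
def Ynorm (d : ℕ) (y : E d × E d → ℝ) : ℝ :=
  (∫ x : E d, ∫ v : E d, maxwellian d v * y (x, v) ^ 2) ^ ((1 : ℝ) / 2)

/-- Membership in `Y`: measurable with finite `‖·‖_Y` norm. -/
def memY (d : ℕ) (y : E d × E d → ℝ) : Prop :=
  Measurable y ∧ Integrable (fun p : E d × E d => maxwellian d p.2 * y p ^ 2)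

/-- `ρ_{μy}(x) = ∫ μ(v) y(x,v) dv`. -/
def rhoMu (d : ℕ) (y : E d × E d → ℝ) (x : E d) : ℝ :=
  ∫ v : E d, maxwellian d v * y (x, v)

/-- `ρ_{μyv}(x) = ∫ v μ(v) y(x,v) dv`. -/
def rhoMuV (d : ℕ) (y : E d × E d → ℝ) (x : E d) : E d :=
  ∫ v : E d, (maxwellian d v * y (x, v)) • v

/-- Gradient in the `v` variable. -/
def gradV (d : ℕ) (y : E d × E d → ℝ) (p : E d × E d) : E d :=
  gradient (fun w => y (p.1, w)) p.2

/-- Gradient in the `x` variable. -/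
def gradX (d : ℕ) (y : E d × E d → ℝ) (p : E d × E d) : E d :=
  gradient (fun w => y (w, p.2)) p.1

/-- The weighted norm of an `ℝ^d`-valued field, `‖F‖_{Y^d}`. -/
def YdNorm (d : ℕ) (F : E d × E d → E d) : ℝ :=
  (∫ x : E d, ∫ v : E d, maxwellian d v * ‖F (x, v)‖ ^ 2) ^ ((1 : ℝ) / 2)

/-- The `V_v = H¹_{μ,v}` norm. -/
def VvNorm (d : ℕ) (y : E d × E d → ℝ) : ℝ :=
  (Ynorm d y ^ 2 + YdNorm d (gradV d y) ^ 2) ^ ((1 : ℝ) / 2)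

/-- The `L²(ℝ^d)` norm of `U`. -/
def UL2norm (d : ℕ) (U : E d → ℝ) : ℝ :=
  (∫ x : E d, U x ^ 2) ^ ((1 : ℝ) / 2)

/-- Laplacian in the `v` variable. -/
def laplacianV (d : ℕ) (y : E d × E d → ℝ) (p : E d × E d) : ℝ :=
  ∑ i : Fin d,
    fderiv ℝ (fun w => fderiv ℝ (fun w' => y (p.1, w')) w (EuclideanSpace.single i 1)) p.2
      (EuclideanSpace.single i 1)

/-- Laplacian in the `x` variable. -/
def laplacianX (d : ℕ) (y : E d × E d → ℝ) (p : E d × E d) : ℝ :=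
  ∑ i : Fin d,
    fderiv ℝ (fun w => fderiv ℝ (fun w' => y (w', p.2)) w (EuclideanSpace.single i 1)) p.1
      (EuclideanSpace.single i 1)

/-- Divergence in the `v` variable of an `ℝ^d`-valued field. -/
def divV (d : ℕ) (F : E d × E d → E d) (p : E d × E d) : ℝ :=
  ∑ i : Fin d,
    fderiv ℝ (fun w => ⟪F (p.1, w), EuclideanSpace.single i 1⟫) p.2
      (EuclideanSpace.single i 1)

/-!
Since `∇μ = -v μ`, Green's identity for the pair `μ f`, `f` gives
`∫ μ f (Δf - v·∇f) = -∫ μ ‖∇f‖²` on `ℝ^d`; applied to each slice `v ↦ y (x, v)` this produces the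
`v`-part of the dissipation. For fixed `v` the weight `μ(v)` is constant in `x`, so after exchanging
the integrals the plain Green identity on the slice `x ↦ y (x, v)` produces the `x`-part, while the
transport term `y v·∇_x y = v·∇_x (y²) / 2` integrates to zero.
-/

section PartialDerivatives

variable {V W : Type*} [NormedAddCommGroup V] [NormedSpace ℝ V] [NormedAddCommGroup W]
  [NormedSpace ℝ W] {G : Type*} [NormedAddCommGroup G] [NormedSpace ℝ G]

lemma contDiff_fderiv_apply {f : V → G} (hf : ContDiff ℝ 2 f) (u : V) :
    ContDiff ℝ 1 fun x => fderiv ℝ f x u :=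
  (hf.fderiv_right le_rfl).clm_apply contDiff_const

lemma continuous_fderiv_apply {f : V → G} (hf : ContDiff ℝ 1 f) (u : V) :
    Continuous fun x => fderiv ℝ f x u :=
  (hf.continuous_fderiv one_ne_zero).clm_apply continuous_const

lemma fderiv_prodMk_right {f : V × W → G} (hf : Differentiable ℝ f) (x : V) (w : W) :
    fderiv ℝ (fun w' => f (x, w')) w = (fderiv ℝ f (x, w)).comp (.inr ℝ V W) :=
  ((hf (x, w)).hasFDerivAt.comp w (hasFDerivAt_prodMk_right x w)).fderiv

lemma contDiff_comp_swap {n : WithTop ℕ∞} {f : V × W → G} (hf : ContDiff ℝ n f) :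
    ContDiff ℝ n (f ∘ Prod.swap) :=
  hf.comp (contDiff_snd.prodMk contDiff_fst)

end PartialDerivatives

lemma hasCompactSupport_prodMk_right {X Y Z : Type*} [TopologicalSpace X] [T1Space X]
    [TopologicalSpace Y] [Zero Z] {f : X × Y → Z} (hf : HasCompactSupport f) (x : X) :
    HasCompactSupport fun w => f (x, w) := by
  have hrange : Set.range (Prod.mk x : Y → X × Y) = {x} ×ˢ Set.univ := by
    ext p; simp [Prod.ext_iff, eq_comm]
  exact hf.comp_isClosedEmbedding
    ⟨isEmbedding_prodMkRight x, hrange ▸ isClosed_singleton.prod isClosed_univ⟩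

lemma hasCompactSupport_comp_swap {X Y Z : Type*} [TopologicalSpace X] [TopologicalSpace Y]
    [Zero Z] {f : X × Y → Z} (hf : HasCompactSupport f) : HasCompactSupport (f ∘ Prod.swap) :=
  hf.comp_homeomorph (.prodComm Y X)

lemma hasCompactSupport_norm_sq {X F : Type*} [TopologicalSpace X] [NormedAddCommGroup F]
    {f : X → F} (hf : HasCompactSupport f) : HasCompactSupport fun x => ‖f x‖ ^ 2 :=
  hf.comp_left (g := fun z => ‖z‖ ^ 2) (by simp)

section GradientLaplacian

open scoped Gradient Laplacian

variable {F : Type*} [NormedAddCommGroup F] [InnerProductSpace ℝ F] {f : F → ℝ}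

section Complete

variable [CompleteSpace F]

lemma continuous_gradient (hf : ContDiff ℝ 1 f) : Continuous (∇ f) :=
  (InnerProductSpace.toDual ℝ F).symm.continuous.comp (hf.continuous_fderiv one_ne_zero)

lemma hasCompactSupport_gradient (hfc : HasCompactSupport f) : HasCompactSupport (∇ f) :=
  (hfc.fderiv (𝕜 := ℝ)).comp_left (map_zero (InnerProductSpace.toDual ℝ F).symm)

lemma gradient_fun_mul {g : F → ℝ} {x : F} (hf : DifferentiableAt ℝ f x)
    (hg : DifferentiableAt ℝ g x) :
    ∇ (fun z => f z * g z) x = f x • ∇ g x + g x • ∇ f x := by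
  refine HasGradientAt.gradient (hasGradientAt_iff_hasFDerivAt.2 ?_)
  simpa only [map_add, map_smul, toDual_gradient] using hf.hasFDerivAt.fun_mul hg.hasFDerivAt

end Complete

variable [FiniteDimensional ℝ F]

lemma inner_gradient_gradient_eq_sum {ι : Type*} [Fintype ι] (b : OrthonormalBasis ι ℝ F)
    (g f : F → ℝ) (x : F) :
    ⟪∇ g x, ∇ f x⟫ = ∑ i, fderiv ℝ g x (b i) * fderiv ℝ f x (b i) := by
  rw [← b.sum_inner_mul_inner]
  refine Finset.sum_congr rfl fun i _ => ?_
  rw [inner_gradient_left, inner_gradient_right, conj_trivial]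

lemma laplacian_eq_sum_fderiv_fderiv {ι : Type*} [Fintype ι] (b : OrthonormalBasis ι ℝ F)
    (hf : ContDiff ℝ 2 f) (x : F) :
    Δ f x = ∑ i, fderiv ℝ (fun z => fderiv ℝ f z (b i)) x (b i) := by
  have hf' : DifferentiableAt ℝ (fderiv ℝ f) x :=
    (hf.fderiv_right (m := 1) le_rfl).differentiable one_ne_zero x
  rw [InnerProductSpace.laplacian_eq_iteratedFDeriv_orthonormalBasis f b]
  simp [iteratedFDeriv_two_apply, fderiv_clm_apply hf' (differentiableAt_const _)]

lemma continuous_laplacian (hf : ContDiff ℝ 2 f) : Continuous (Δ f) := by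
  rw [funext (laplacian_eq_sum_fderiv_fderiv (stdOrthonormalBasis ℝ F) hf)]
  exact continuous_finsetSum _ fun i _ =>
    continuous_fderiv_apply (contDiff_fderiv_apply hf _) _

end GradientLaplacian

section IntegrationByParts

open scoped Gradient Laplacian

lemma integral_mul_fderiv_eq_neg_of_hasCompactSupport {V : Type*} [NormedAddCommGroup V]
    [NormedSpace ℝ V] [FiniteDimensional ℝ V] [MeasurableSpace V] [BorelSpace V] (ν : Measure V)
    [ν.IsAddHaarMeasure] {f g : V → ℝ} (hg : ContDiff ℝ 1 g) (hgc : HasCompactSupport g)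
    (hf : ContDiff ℝ 1 f) (u : V) :
    ∫ x, g x * fderiv ℝ f x u ∂ν = -∫ x, fderiv ℝ g x u * f x ∂ν := by
  have hf' := continuous_fderiv_apply hf u
  have hg' := continuous_fderiv_apply hg u
  exact integral_mul_fderiv_eq_neg_fderiv_mul_of_integrable
    ((hg'.mul hf.continuous).integrable_of_hasCompactSupport
      (hgc.fderiv_apply (𝕜 := ℝ) u).mul_right)
    ((hg.continuous.mul hf').integrable_of_hasCompactSupport hgc.mul_right)
    ((hg.continuous.mul hf.continuous).integrable_of_hasCompactSupport hgc.mul_right)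
    (fun x _ => hg.differentiable one_ne_zero x) (fun x _ => hf.differentiable one_ne_zero x)

variable {F : Type*} [NormedAddCommGroup F] [InnerProductSpace ℝ F] [FiniteDimensional ℝ F]
  [MeasurableSpace F] [BorelSpace F] (ν : Measure F) [ν.IsAddHaarMeasure] {f g : F → ℝ}

theorem integral_mul_laplacian (hg : ContDiff ℝ 1 g) (hgc : HasCompactSupport g)
    (hf : ContDiff ℝ 2 f) : ∫ x, g x * Δ f x ∂ν = -∫ x, ⟪∇ g x, ∇ f x⟫ ∂ν := by
  let b := stdOrthonormalBasis ℝ F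
  have hD (i) : ContDiff ℝ 1 fun x => fderiv ℝ f x (b i) := contDiff_fderiv_apply hf (b i)
  have integrable_left (i) :
      Integrable (fun x => g x * fderiv ℝ (fun z => fderiv ℝ f z (b i)) x (b i)) ν :=
    (hg.continuous.mul (continuous_fderiv_apply (hD i) (b i))).integrable_of_hasCompactSupport
      hgc.mul_right
  have integrable_right (i) : Integrable (fun x => fderiv ℝ g x (b i) * fderiv ℝ f x (b i)) ν :=
    ((continuous_fderiv_apply hg (b i)).mul (hD i).continuous).integrable_of_hasCompactSupport
      (hgc.fderiv_apply (𝕜 := ℝ) (b i)).mul_right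
  simp_rw [inner_gradient_gradient_eq_sum b, laplacian_eq_sum_fderiv_fderiv b hf, Finset.mul_sum]
  rw [integral_finsetSum _ fun i _ => integrable_left i,
    integral_finsetSum _ fun i _ => integrable_right i, ← Finset.sum_neg_distrib]
  exact Finset.sum_congr rfl fun i _ =>
    integral_mul_fderiv_eq_neg_of_hasCompactSupport ν hg hgc (hD i) (b i)

theorem integral_self_mul_laplacian (hf : ContDiff ℝ 2 f) (hfc : HasCompactSupport f) :
    ∫ x, f x * Δ f x ∂ν = -∫ x, ‖∇ f x‖ ^ 2 ∂ν := by
  simp_rw [integral_mul_laplacian ν (hf.of_le one_le_two) hfc hf, real_inner_self_eq_norm_sq]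

theorem integral_self_mul_inner_gradient (hf : ContDiff ℝ 1 f) (hfc : HasCompactSupport f)
    (u : F) : ∫ x, f x * ⟪u, ∇ f x⟫ ∂ν = 0 := by
  simp_rw [inner_gradient_right, conj_trivial]
  have h := integral_mul_fderiv_eq_neg_of_hasCompactSupport ν hf hfc hf u
  simp_rw [mul_comm (fderiv ℝ f _ u)] at h
  linarith

end IntegrationByParts

section Maxwellian

open scoped Gradient Laplacian

variable {d : ℕ}

lemma contDiff_maxwellian {n : WithTop ℕ∞} : ContDiff ℝ n (maxwellian d) :=
  contDiff_const.mul (((contDiff_id.norm_sq ℝ).neg.div_const 2).exp)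

lemma continuous_maxwellian : Continuous (maxwellian d) :=
  (contDiff_maxwellian (n := 0)).continuous

lemma hasGradientAt_maxwellian (v : E d) :
    HasGradientAt (maxwellian d) (-maxwellian d v • v) v := by
  have h : HasFDerivAt (maxwellian d) _ v :=
    ((((hasStrictFDerivAt_norm_sq v).hasFDerivAt.neg).mul_const (2⁻¹ : ℝ)).exp).const_mul
      ((2 * Real.pi) ^ (-(d : ℝ) / 2))
  rw [hasGradientAt_iff_hasFDerivAt]
  refine h.congr_fderiv ?_
  ext w
  simp only [maxwellian, div_eq_mul_inv, Pi.neg_apply, smul_neg, smul_eq_mul, nsmul_eq_mul,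
    Nat.cast_ofNat, neg_apply, smul_apply, coe_innerSL_apply, neg_smul, map_neg, map_smul,
    InnerProductSpace.toDual_apply_apply]
  ring

lemma gradient_maxwellian_mul {f : E d → ℝ} {v : E d} (hf : DifferentiableAt ℝ f v) :
    ∇ (fun w => maxwellian d w * f w) v = maxwellian d v • (∇ f v - f v • v) := by
  have hμ := hasGradientAt_maxwellian v
  rw [gradient_fun_mul hμ.differentiableAt hf, hμ.gradient]
  module

lemma integrable_maxwellian_mul {f : E d → ℝ} (hf : Continuous f) (hfc : HasCompactSupport f) :
    Integrable fun v => maxwellian d v * f v :=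
  (continuous_maxwellian.mul hf).integrable_of_hasCompactSupport hfc.mul_left

theorem integral_maxwellian_mul_self_mul_laplacian_sub_inner {f : E d → ℝ} (hf : ContDiff ℝ 2 f)
    (hfc : HasCompactSupport f) :
    ∫ v, maxwellian d v * (f v * (Δ f v - ⟪v, ∇ f v⟫)) =
      -∫ v, maxwellian d v * ‖∇ f v‖ ^ 2 := by
  have hf1 : ContDiff ℝ 1 f := hf.of_le one_le_two
  have hgrad := continuous_gradient hf1
  have integrable_laplacian : Integrable fun v => maxwellian d v * (f v * Δ f v) :=
    integrable_maxwellian_mul (hf.continuous.mul (continuous_laplacian hf)) hfc.mul_right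
  have integrable_drift : Integrable fun v => maxwellian d v * (f v * ⟪v, ∇ f v⟫) :=
    integrable_maxwellian_mul (hf.continuous.mul (continuous_id.inner hgrad)) hfc.mul_right
  have integrable_energy : Integrable fun v => maxwellian d v * ‖∇ f v‖ ^ 2 :=
    integrable_maxwellian_mul (hgrad.norm.pow 2)
      (hasCompactSupport_norm_sq (hasCompactSupport_gradient hfc))
  have green : ∫ v, maxwellian d v * (f v * Δ f v) =
      -∫ v, (maxwellian d v * ‖∇ f v‖ ^ 2 - maxwellian d v * (f v * ⟪v, ∇ f v⟫)) := by
    simp_rw [← mul_assoc]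
    rw [integral_mul_laplacian volume (contDiff_maxwellian.mul hf1) hfc.mul_left hf]
    congr 2 with v
    rw [gradient_maxwellian_mul (hf1.differentiable one_ne_zero v), real_inner_smul_left,
      inner_sub_left, real_inner_smul_left, real_inner_self_eq_norm_sq]
    ring
  simp_rw [mul_sub]
  rw [integral_sub integrable_laplacian integrable_drift, green,
    integral_sub integrable_energy integrable_drift]
  ring

end Maxwellian

section PhaseSpace

open scoped Gradient Laplacian

variable {d : ℕ} {y : E d × E d → ℝ}

lemma gradV_eq_toDual_symm (hy : Differentiable ℝ y) (p : E d × E d) :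
    gradV d y p = (InnerProductSpace.toDual ℝ (E d)).symm ((fderiv ℝ y p).comp (.inr ℝ _ _)) := by
  rw [gradV, gradient, fderiv_prodMk_right hy]

lemma continuous_gradV (hy : ContDiff ℝ 1 y) : Continuous (gradV d y) := by
  rw [funext (gradV_eq_toDual_symm (hy.differentiable one_ne_zero))]
  exact (InnerProductSpace.toDual ℝ (E d)).symm.continuous.comp
    ((hy.continuous_fderiv one_ne_zero).clm_comp continuous_const)

lemma hasCompactSupport_gradV (hy : ContDiff ℝ 1 y) (hyc : HasCompactSupport y) :
    HasCompactSupport (gradV d y) := by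
  rw [funext (gradV_eq_toDual_symm (hy.differentiable one_ne_zero))]
  exact (hyc.fderiv (𝕜 := ℝ)).comp_left (g := fun L : E d × E d →L[ℝ] ℝ =>
    (InnerProductSpace.toDual ℝ (E d)).symm (L.comp (.inr ℝ _ _))) (by simp)

lemma laplacianV_eq_laplacian (hy : ContDiff ℝ 2 y) (p : E d × E d) :
    laplacianV d y p = Δ (fun v => y (p.1, v)) p.2 := by
  have hslice : ContDiff ℝ 2 fun v => y (p.1, v) := hy.comp (contDiff_prodMk_right p.1)
  rw [laplacian_eq_sum_fderiv_fderiv (EuclideanSpace.basisFun (Fin d) ℝ) hslice]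
  simp only [laplacianV, EuclideanSpace.basisFun_apply]

lemma continuous_laplacianV (hy : ContDiff ℝ 2 y) : Continuous (laplacianV d y) := by
  have hsum : laplacianV d y = fun p => ∑ i,
      fderiv ℝ (fun q => fderiv ℝ y q (0, EuclideanSpace.single i 1)) p
        (0, EuclideanSpace.single i 1) := by
    ext p
    simp [laplacianV, fderiv_prodMk_right (hy.differentiable two_ne_zero),
      fderiv_prodMk_right ((contDiff_fderiv_apply hy _).differentiable one_ne_zero)]
  rw [hsum]
  exact continuous_finsetSum _ fun i _ => continuous_fderiv_apply (contDiff_fderiv_apply hy _) _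

lemma gradX_eq_gradV_comp_swap (y : E d × E d → ℝ) :
    gradX d y = gradV d (y ∘ Prod.swap) ∘ Prod.swap := rfl

lemma laplacianX_eq_laplacianV_comp_swap (y : E d × E d → ℝ) :
    laplacianX d y = laplacianV d (y ∘ Prod.swap) ∘ Prod.swap := rfl

lemma continuous_gradX (hy : ContDiff ℝ 1 y) : Continuous (gradX d y) := by
  rw [gradX_eq_gradV_comp_swap]
  exact (continuous_gradV (contDiff_comp_swap hy)).comp continuous_swap

lemma hasCompactSupport_gradX (hy : ContDiff ℝ 1 y) (hyc : HasCompactSupport y) :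
    HasCompactSupport (gradX d y) := by
  rw [gradX_eq_gradV_comp_swap]
  exact hasCompactSupport_comp_swap
    (hasCompactSupport_gradV (contDiff_comp_swap hy) (hasCompactSupport_comp_swap hyc))

lemma laplacianX_eq_laplacian (hy : ContDiff ℝ 2 y) (p : E d × E d) :
    laplacianX d y p = Δ (fun x => y (x, p.2)) p.1 := by
  rw [laplacianX_eq_laplacianV_comp_swap]
  exact laplacianV_eq_laplacian (contDiff_comp_swap hy) p.swap

lemma continuous_laplacianX (hy : ContDiff ℝ 2 y) : Continuous (laplacianX d y) := by
  rw [laplacianX_eq_laplacianV_comp_swap]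
  exact (continuous_laplacianV (contDiff_comp_swap hy)).comp continuous_swap

end PhaseSpace

section PhaseSpaceIntegrals

variable {d : ℕ} {f g y : E d × E d → ℝ}

lemma integral_integral_maxwellian_mul_add_const_mul (hf : Continuous f)
    (hfc : HasCompactSupport f) (hg : Continuous g) (hgc : HasCompactSupport g) (c : ℝ) :
    ∫ x, ∫ v, maxwellian d v * (f (x, v) + c * g (x, v)) =
      (∫ x, ∫ v, maxwellian d v * f (x, v)) + c * ∫ x, ∫ v, maxwellian d v * g (x, v) := by
  have integrable_mul {h : E d × E d → ℝ} (hh : Continuous h) (hhc : HasCompactSupport h) :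
      Integrable (fun p => maxwellian d p.2 * h p) (volume.prod volume) :=
    ((continuous_maxwellian.comp continuous_snd).mul hh).integrable_of_hasCompactSupport
      hhc.mul_left
  simp_rw [← integral_const_mul, mul_add, mul_left_comm (maxwellian d _) c]
  exact integral_integral_add (integrable_mul hf hfc) ((integrable_mul hg hgc).const_mul c)

lemma integral_integral_maxwellian_mul_swap (hf : Continuous f) (hfc : HasCompactSupport f) :
    ∫ x, ∫ v, maxwellian d v * f (x, v) = ∫ v, maxwellian d v * ∫ x, f (x, v) := by
  simp_rw [← integral_const_mul]
  exact integral_integral_swap_of_hasCompactSupport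
    ((continuous_maxwellian.comp continuous_snd).mul hf) hfc.mul_left

theorem integral_integral_maxwellian_mul_laplacianV_sub_inner_gradV (hy : ContDiff ℝ 2 y)
    (hyc : HasCompactSupport y) :
    ∫ x, ∫ v, maxwellian d v * (y (x, v) * (laplacianV d y (x, v) - ⟪v, gradV d y (x, v)⟫)) =
      -∫ x, ∫ v, maxwellian d v * ‖gradV d y (x, v)‖ ^ 2 := by
  rw [← integral_neg]
  congr 1 with x
  simp_rw [laplacianV_eq_laplacian hy]
  exact integral_maxwellian_mul_self_mul_laplacian_sub_inner (hy.comp (contDiff_prodMk_right x))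
    (hasCompactSupport_prodMk_right hyc x)

theorem integral_integral_maxwellian_mul_laplacianX (hy : ContDiff ℝ 2 y)
    (hyc : HasCompactSupport y) :
    ∫ x, ∫ v, maxwellian d v * (y (x, v) * laplacianX d y (x, v)) =
      -∫ x, ∫ v, maxwellian d v * ‖gradX d y (x, v)‖ ^ 2 := by
  have hy1 : ContDiff ℝ 1 y := hy.of_le one_le_two
  have green (v : E d) : ∫ x, y (x, v) * laplacianX d y (x, v) =
      -∫ x, ‖gradX d y (x, v)‖ ^ 2 := by
    simp_rw [laplacianX_eq_laplacian hy]
    exact integral_self_mul_laplacian volume (hy.comp (contDiff_prodMk_left v))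
      (hasCompactSupport_prodMk_right (hasCompactSupport_comp_swap hyc) v)
  rw [integral_integral_maxwellian_mul_swap (f := fun p => y p * laplacianX d y p)
      (hy.continuous.mul (continuous_laplacianX hy)) hyc.mul_right,
    integral_integral_maxwellian_mul_swap (f := fun p => ‖gradX d y p‖ ^ 2)
      ((continuous_gradX hy1).norm.pow 2)
      (hasCompactSupport_norm_sq (hasCompactSupport_gradX hy1 hyc))]
  simp_rw [green, mul_neg, integral_neg]

theorem integral_integral_maxwellian_mul_inner_gradX (hy : ContDiff ℝ 1 y)
    (hyc : HasCompactSupport y) :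
    ∫ x, ∫ v, maxwellian d v * (y (x, v) * ⟪v, gradX d y (x, v)⟫) = 0 := by
  have transport (v : E d) : ∫ x, y (x, v) * ⟪v, gradX d y (x, v)⟫ = 0 :=
    integral_self_mul_inner_gradient volume (hy.comp (contDiff_prodMk_left v))
      (hasCompactSupport_prodMk_right (hasCompactSupport_comp_swap hyc) v) v
  rw [integral_integral_maxwellian_mul_swap (f := fun p => y p * ⟪p.2, gradX d y p⟫)
    (hy.continuous.mul (continuous_snd.inner (continuous_gradX hy))) hyc.mul_right]
  simp [transport]

theorem integral_integral_maxwellian_mul_laplacianV_sub_drift_sub_transport (hy : ContDiff ℝ 2 y)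
    (hyc : HasCompactSupport y) :
    ∫ x, ∫ v, maxwellian d v * (y (x, v) *
        (laplacianV d y (x, v) - ⟪v, gradV d y (x, v)⟫ - ⟪v, gradX d y (x, v)⟫)) =
      -∫ x, ∫ v, maxwellian d v * ‖gradV d y (x, v)‖ ^ 2 := by
  have hy1 : ContDiff ℝ 1 y := hy.of_le one_le_two
  have split := integral_integral_maxwellian_mul_add_const_mul
    (f := fun p => y p * (laplacianV d y p - ⟪p.2, gradV d y p⟫))
    (g := fun p => y p * ⟪p.2, gradX d y p⟫)
    (hy.continuous.mul
      ((continuous_laplacianV hy).sub (continuous_snd.inner (continuous_gradV hy1))))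
    hyc.mul_right (hy.continuous.mul (continuous_snd.inner (continuous_gradX hy1)))
    hyc.mul_right (-1)
  rw [integral_integral_maxwellian_mul_laplacianV_sub_inner_gradV hy hyc,
    integral_integral_maxwellian_mul_inner_gradX hy1 hyc, mul_zero, add_zero] at split
  rw [← split]
  congr! 5 with x v
  ring

theorem statement9_general (ε : ℝ) (hy : ContDiff ℝ 2 y) (hyc : HasCompactSupport y) :
    ∫ x, ∫ v, maxwellian d v * y (x, v) *
        (laplacianV d y (x, v) - ⟪v, gradV d y (x, v)⟫ - ⟪v, gradX d y (x, v)⟫ +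
          ε * laplacianX d y (x, v)) =
      -∫ x, ∫ v, maxwellian d v *
        (‖gradV d y (x, v)‖ ^ 2 + ε * ‖gradX d y (x, v)‖ ^ 2) := by
  have hy1 : ContDiff ℝ 1 y := hy.of_le one_le_two
  have hgradV := continuous_gradV hy1
  have hgradX := continuous_gradX hy1
  have split_operator := integral_integral_maxwellian_mul_add_const_mul
    (f := fun p => y p * (laplacianV d y p - ⟪p.2, gradV d y p⟫ - ⟪p.2, gradX d y p⟫))
    (g := fun p => y p * laplacianX d y p)
    (hy.continuous.mul (((continuous_laplacianV hy).sub
      (continuous_snd.inner hgradV)).sub (continuous_snd.inner hgradX)))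
    hyc.mul_right (hy.continuous.mul (continuous_laplacianX hy)) hyc.mul_right ε
  have split_energy := integral_integral_maxwellian_mul_add_const_mul
    (f := fun p => ‖gradV d y p‖ ^ 2) (g := fun p => ‖gradX d y p‖ ^ 2)
    (hgradV.norm.pow 2) (hasCompactSupport_norm_sq (hasCompactSupport_gradV hy1 hyc))
    (hgradX.norm.pow 2) (hasCompactSupport_norm_sq (hasCompactSupport_gradX hy1 hyc)) ε
  rw [integral_integral_maxwellian_mul_laplacianV_sub_drift_sub_transport hy hyc,
    integral_integral_maxwellian_mul_laplacianX hy hyc] at split_operator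
  rw [split_energy, neg_add, ← mul_neg, ← split_operator]
  congr! 4 with x v
  ring

end PhaseSpaceIntegrals

/-- For every `ε > 0` and `y ∈ C_c^∞(ℝ^{2d})`, with
`A_ε y = Δ_v y − v·∇_v y − v·∇_x y + ε Δ_x y`, one has
`⟨A_ε y, y⟩_Y = −∫∫ μ (‖∇_v y‖² + ε ‖∇_x y‖²)`. -/
theorem statement9 (d : ℕ) (hd : 1 ≤ d) (ε : ℝ) (hε : 0 < ε)
    (y : E d × E d → ℝ) (hy : ContDiff ℝ (⊤ : ℕ∞) y) (hyc : HasCompactSupport y)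
    (Aε : E d × E d → ℝ)
    (hAε : ∀ p : E d × E d,
      Aε p = laplacianV d y p - ⟪p.2, gradV d y p⟫ - ⟪p.2, gradX d y p⟫ +
        ε * laplacianX d y p) :
    (∫ x : E d, ∫ v : E d, maxwellian d v * y (x, v) * Aε (x, v)) =
      -∫ x : E d, ∫ v : E d, maxwellian d v *
        (‖gradV d y (x, v)‖ ^ 2 + ε * ‖gradX d y (x, v)‖ ^ 2) := by
  simpa only [hAε] using statement9_general ε (contDiff_infty.1 hy 2) hyc
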